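/- arXiv:1302.0071 — 6 statements merged into one kernel-verified Lean document; each statement's English description precedes it below -/
import Mathlib

section
/- Let F be a field whose characteristic is either zero or a prime p > h, where h ≥ 2 is an integer. Then the set A := {(x, x², …, x^h) : x ∈ F} is a B_h[1] set in the additive group (F^h, +); that is, for every s ∈ F^h there is at most one multiset {a₁, …, a_h} of elements of A with a₁ + ⋯ + a_h = s. -/
/-- `A` is a `B_h[g]` set in the additive commutative monoid `G`: every element `x` of `G`
has at most `g` representations as a sum of `h` elements of `A`, where representations
differing only in the order of summands are identified; i.e., for each `x : G` there are
at most `g` multisets of size `h`, with all elements in `A`, whose sum is `x`. -/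
def IsBhSet {G : Type*} [AddCommMonoid G] (A : Set G) (h g : ℕ) : Prop :=
  ∀ x : G, ∀ S : Finset (Multiset G),
    (∀ s ∈ S, Multiset.card s = h ∧ (∀ a ∈ s, a ∈ A) ∧ s.sum = x) → S.card ≤ g

/-!
A sum of `h` points of the curve `x ↦ (x, x², …, x^h)` records the first `h` power sums of the
multiset of their parameters. Newton's identities express `k * eₖ` through the power sums
`p₁, …, pₖ` and the `eⱼ` with `j < k`; when `1, …, h` are cancellable this determines the
elementary symmetric functions `e₁, …, e_h`. By Vieta they are, up to sign, the coefficients of the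
monic polynomial of degree `h` whose roots are the parameters, so the parameters are determined.
-/

open Finset Nat Polynomial

section PowerSums

variable {R : Type*} [CommRing R]

theorem natCast_mul_multiset_esymm (s : Multiset R) (k : ℕ) :
    k * s.esymm k = (-1) ^ (k + 1) * ∑ a ∈ antidiagonal k with a.1 < k,
      (-1) ^ a.1 * s.esymm a.1 * (s.map (· ^ a.2)).sum := by
  classical
  have eval_esymm (j : ℕ) :
      MvPolynomial.aeval (fun x : s ↦ (x : R)) (MvPolynomial.esymm s R j) = s.esymm j := by
    rw [MvPolynomial.aeval_esymm_eq_multiset_esymm, s.map_univ_coe]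
  have eval_psum (j : ℕ) : MvPolynomial.aeval (fun x : s ↦ (x : R)) (MvPolynomial.psum s R j) =
      (s.map (· ^ j)).sum := by
    simp only [MvPolynomial.psum, map_sum, map_pow, MvPolynomial.aeval_X]
    exact congrArg Multiset.sum (s.map_univ_comp_coe (· ^ j))
  simpa only [map_mul, map_natCast, map_sum, map_pow, map_neg, map_one, eval_esymm, eval_psum]
    using congrArg (MvPolynomial.aeval fun x : s ↦ (x : R)) (MvPolynomial.mul_esymm_eq_sum s R k)

theorem isLeftRegular_natCast_of_le_of_isLeftRegular_factorial {n k : ℕ}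
    (hn : IsLeftRegular (n ! : R)) (hk : 0 < k) (hkn : k ≤ n) : IsLeftRegular (k : R) := by
  obtain ⟨c, hc⟩ := dvd_factorial hk hkn
  rw [hc, mul_comm, Nat.cast_mul] at hn
  exact hn.of_mul

theorem multiset_esymm_eq_of_sum_map_pow_eq {n : ℕ} (hn : IsLeftRegular (n ! : R))
    {s t : Multiset R}
    (hst : ∀ k, 0 < k → k ≤ n → (s.map (· ^ k)).sum = (t.map (· ^ k)).sum) {k : ℕ} (hk : k ≤ n) :
    s.esymm k = t.esymm k := by
  induction k using Nat.strong_induction_on with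
  | _ k ih =>
    rcases k.eq_zero_or_pos with rfl | hpos
    · simp [Multiset.esymm]
    apply isLeftRegular_natCast_of_le_of_isLeftRegular_factorial hn hpos hk
    change k * s.esymm k = k * t.esymm k
    rw [natCast_mul_multiset_esymm, natCast_mul_multiset_esymm]
    congr 1
    refine sum_congr rfl fun a ha ↦ ?_
    obtain ⟨hsum, hlt⟩ : a.1 + a.2 = k ∧ a.1 < k := by simpa using ha
    rw [ih a.1 hlt (by lia), hst a.2 (by lia) (by lia)]

theorem multiset_eq_of_esymm_eq [IsDomain R] {s t : Multiset R} (hcard : s.card = t.card)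
    (hst : ∀ k ≤ s.card, s.esymm k = t.esymm k) : s = t := by
  have prod_eq : (s.map fun x ↦ X - C x).prod = (t.map fun x ↦ X - C x).prod := by
    rw [Multiset.prod_X_sub_X_eq_sum_esymm, Multiset.prod_X_sub_X_eq_sum_esymm, ← hcard]
    refine sum_congr rfl fun k hk ↦ ?_
    rw [hst k (mem_range_succ_iff.mp hk)]
  rw [← roots_multiset_prod_X_sub_C s, prod_eq, roots_multiset_prod_X_sub_C]

theorem multiset_eq_of_sum_map_pow_eq [IsDomain R] {s t : Multiset R} (hcard : s.card = t.card)
    (hfact : (s.card ! : R) ≠ 0)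
    (hst : ∀ k, 0 < k → k ≤ s.card → (s.map (· ^ k)).sum = (t.map (· ^ k)).sum) : s = t :=
  multiset_eq_of_esymm_eq hcard fun _ hk ↦
    multiset_esymm_eq_of_sum_map_pow_eq (IsRegular.of_ne_zero hfact).left hst hk

end PowerSums

theorem isBhSet_one_of_subset_range {α G : Type*} [AddCommMonoid G] {A : Set G} {f : α → G} {h : ℕ}
    (hA : A ⊆ Set.range f)
    (hf : ∀ s t : Multiset α, s.card = h → t.card = h → (s.map f).sum = (t.map f).sum → s = t) :
    IsBhSet A h 1 := by
  intro x S hS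
  have exists_params (u : Multiset G) (hu : u ∈ S) :
      ∃ s : Multiset α, s.card = h ∧ (s.map f).sum = x ∧ s.map f = u := by
    obtain ⟨hcard, hmem, hsum⟩ := hS u hu
    have : CanLift G α f (· ∈ Set.range f) := ⟨fun _ ↦ id⟩
    lift u to Multiset α using fun a ha ↦ hA (hmem a ha)
    exact ⟨u, by simpa using hcard, hsum, rfl⟩
  refine card_le_one.mpr fun u hu v hv ↦ ?_
  obtain ⟨s, hs, hsx, rfl⟩ := exists_params u hu
  obtain ⟨t, ht, htx, rfl⟩ := exists_params v hv
  rw [hf s t hs ht (hsx.trans htx.symm)]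

theorem natCast_factorial_ne_zero_of_ringChar_eq_zero_or_lt {R : Type*} [NonAssocSemiring R] {n : ℕ}
    (hchar : ringChar R = 0 ∨ (Nat.Prime (ringChar R) ∧ n < ringChar R)) : (n ! : R) ≠ 0 := by
  rw [Ne, ringChar.spec]
  rcases hchar with hzero | ⟨hprime, hlt⟩
  · rw [hzero, zero_dvd_iff]
    exact n.factorial_ne_zero
  · rw [hprime.dvd_factorial]
    exact hlt.not_ge

theorem stmt0_general {R : Type*} [CommRing R] [IsDomain R] (h : ℕ) (hfact : (h ! : R) ≠ 0) :
    IsBhSet {v : Fin h → R | ∃ x : R, v = fun i => x ^ (i.val + 1)} h 1 := by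
  refine isBhSet_one_of_subset_range (f := fun (x : R) (i : Fin h) ↦ x ^ (i.val + 1))
    (fun _ ⟨x, hx⟩ ↦ ⟨x, hx.symm⟩) ?_
  rintro s t rfl ht hsum
  refine multiset_eq_of_sum_map_pow_eq ht.symm hfact fun k hpos hk ↦ ?_
  have coord := congrFun hsum ⟨k - 1, by lia⟩
  simpa only [Pi.multiset_sum_apply, Multiset.map_map, Function.comp_def,
    Nat.sub_add_cancel hpos] using coord

/-- If `F` is a field of characteristic zero or `p > h` (`h ≥ 2`), then
`{(x, x², …, x^h) : x ∈ F}` is a `B_h[1]` set in `(F^h, +)`. -/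
theorem stmt0 {F : Type*} [Field F] (h : ℕ) (hh : 2 ≤ h)
    (hchar : ringChar F = 0 ∨ (Nat.Prime (ringChar F) ∧ h < ringChar F)) :
    IsBhSet {v : Fin h → F | ∃ x : F, v = fun i => x ^ (i.val + 1)} h 1 :=
  stmt0_general h (natCast_factorial_ne_zero_of_ringChar_eq_zero_or_lt hchar)
end

section
/- For every prime p, every integer h ≥ 2 with p > h, and every positive integer n, there exists a B_h[1] set with exactly pⁿ elements in the additive group ((ℤ/pℤ)^(h·n), +). -/
/-!
The `B_h` set is the moment curve `x ↦ (x, x², …, x^h)` over the field with `pⁿ` elements, inside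
`𝔽_{pⁿ}^h ≅ (ℤ/pℤ)^(hn)`. A sum of `h` points of the curve records the first `h` power sums of the
underlying multiset of parameters. As `h < p`, the numbers `1, …, h` are invertible, so Newton's
identities turn these power sums into the elementary symmetric functions, i.e. the coefficients of
the monic polynomial of degree `h` whose roots are the parameters; the multiset is thus determined.
-/

section PowerSums

variable {R : Type*} [CommRing R]

theorem natCast_mul_esymm_eq_sum (s : Multiset R) (k : ℕ) :
    k * s.esymm k = (-1) ^ (k + 1) *
      ∑ a ∈ Finset.HasAntidiagonal.antidiagonal k with a.1 < k,
        (-1) ^ a.1 * s.esymm a.1 * (s.map (· ^ a.2)).sum := by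
  classical
  have aeval_esymm (j : ℕ) :
      MvPolynomial.aeval (fun x : s ↦ (x : R)) (MvPolynomial.esymm s R j) = s.esymm j := by
    rw [MvPolynomial.aeval_esymm_eq_multiset_esymm, Multiset.map_univ_coe]
  have aeval_psum (j : ℕ) :
      MvPolynomial.aeval (fun x : s ↦ (x : R)) (MvPolynomial.psum s R j) =
        (s.map (· ^ j)).sum := by
    simp only [MvPolynomial.psum, map_sum, map_pow, MvPolynomial.aeval_X]
    exact congrArg Multiset.sum (s.map_univ (· ^ j))
  simpa only [map_mul, map_sum, map_pow, map_neg, map_one, map_natCast, aeval_esymm, aeval_psum]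
    using congrArg (MvPolynomial.aeval fun x : s ↦ (x : R)) (MvPolynomial.mul_esymm_eq_sum s R k)

variable [IsDomain R] {s t : Multiset R} {h : ℕ}

theorem esymm_eq_of_sum_map_pow_eq (hfact : (h.factorial : R) ≠ 0)
    (hpow : ∀ k ∈ Finset.Icc 1 h, (s.map (· ^ k)).sum = (t.map (· ^ k)).sum) :
    ∀ k ≤ h, s.esymm k = t.esymm k := by
  intro k hk
  induction k using Nat.strong_induction_on with
  | _ k ih =>
    rcases Nat.eq_zero_or_pos k with rfl | hk_pos
    · simp [Multiset.esymm]
    have hk_ne : (k : R) ≠ 0 :=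
      ne_zero_of_dvd_ne_zero hfact (Nat.cast_dvd_cast (Nat.dvd_factorial hk_pos hk))
    refine mul_left_cancel₀ hk_ne ?_
    rw [natCast_mul_esymm_eq_sum, natCast_mul_esymm_eq_sum]
    congr 1
    refine Finset.sum_congr rfl fun a ha ↦ ?_
    obtain ⟨hadd, hlt⟩ : a.1 + a.2 = k ∧ a.1 < k := by simpa using ha
    rw [ih a.1 hlt (by lia), hpow a.2 (Finset.mem_Icc.2 (by lia))]

theorem eq_of_esymm_eq (hcard : s.card = t.card) (hesymm : ∀ k ≤ s.card, s.esymm k = t.esymm k) :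
    s = t := by
  have hprod : (s.map fun a ↦ Polynomial.X - Polynomial.C a).prod =
      (t.map fun a ↦ Polynomial.X - Polynomial.C a).prod := by
    rw [Multiset.prod_X_sub_X_eq_sum_esymm, Multiset.prod_X_sub_X_eq_sum_esymm, ← hcard]
    exact Finset.sum_congr rfl fun k hk ↦ by rw [hesymm k (Finset.mem_range_succ_iff.1 hk)]
  simpa only [Polynomial.roots_multiset_prod_X_sub_C] using congrArg Polynomial.roots hprod

theorem eq_of_sum_map_pow_eq (hfact : (h.factorial : R) ≠ 0) (hs : s.card = h) (ht : t.card = h)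
    (hpow : ∀ k ∈ Finset.Icc 1 h, (s.map (· ^ k)).sum = (t.map (· ^ k)).sum) : s = t :=
  eq_of_esymm_eq (hs.trans ht.symm) (hs ▸ esymm_eq_of_sum_map_pow_eq hfact hpow)

end PowerSums

section BhSets

variable {G H : Type*} [AddCommMonoid G] [AddCommMonoid H]

theorem exists_multiset_map_eq {ι α : Type*} {f : ι → α} {s : Multiset α}
    (hs : ∀ a ∈ s, a ∈ Set.range f) : ∃ t : Multiset ι, t.map f = s :=
  have : CanLift α ι f (· ∈ Set.range f) := ⟨fun _ ha ↦ ha⟩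
  CanLift.prf s hs

theorem isBhSet_one_range {ι : Type*} {f : ι → G} {h : ℕ}
    (hf : ∀ s t : Multiset ι, s.card = h → t.card = h → (s.map f).sum = (t.map f).sum → s = t) :
    IsBhSet (Set.range f) h 1 := by
  intro x S hS
  rw [Finset.card_le_one]
  intro s hs t ht
  obtain ⟨hs_card, hs_range, hs_sum⟩ := hS s hs
  obtain ⟨ht_card, ht_range, ht_sum⟩ := hS t ht
  obtain ⟨s, rfl⟩ := exists_multiset_map_eq hs_range
  obtain ⟨t, rfl⟩ := exists_multiset_map_eq ht_range
  rw [Multiset.card_map] at hs_card ht_card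
  rw [hf s t hs_card ht_card (hs_sum.trans ht_sum.symm)]

theorem IsBhSet.image {A : Set G} {h g : ℕ} (hA : IsBhSet A h g) {f : G →+ H}
    (hf : Function.Injective f) : IsBhSet (f '' A) h g := by
  classical
  intro x S hS
  have hS_image : (S : Set (Multiset H)) ⊆
      Multiset.map f '' {s | s.card = h ∧ (∀ a ∈ s, a ∈ A) ∧ f s.sum = x} := by
    intro s hs
    obtain ⟨hcard, hmem, hsum⟩ := hS s hs
    obtain ⟨s, rfl⟩ := exists_multiset_map_eq fun b hb ↦ Set.image_subset_range f A (hmem b hb)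
    refine ⟨s, ⟨by simpa using hcard, fun a ha ↦ ?_, by rwa [map_multiset_sum]⟩, rfl⟩
    exact hf.mem_set_image.1 (hmem _ (Multiset.mem_map_of_mem f ha))
  obtain ⟨T, hT, rfl⟩ := Finset.subset_set_image_iff.1 hS_image
  rcases T.eq_empty_or_nonempty with rfl | ⟨t, ht⟩
  · simp
  refine Finset.card_image_le.trans (hA t.sum T fun s hs ↦ ?_)
  exact ⟨(hT hs).1, (hT hs).2.1, hf ((hT hs).2.2.trans (hT ht).2.2.symm)⟩

end BhSets

/-- The moment curve `x ↦ (x, x², …, x^h)` in `R^h`. Coordinates are indexed from `0`, so the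
coordinate of index `i` is `x ^ (i + 1)`. -/
def momentCurve (R : Type*) [Monoid R] (h : ℕ) (x : R) : Fin h → R :=
  fun i ↦ x ^ (i.val + 1)

theorem momentCurve_injective (R : Type*) [Monoid R] {h : ℕ} (hh : 0 < h) :
    Function.Injective (momentCurve R h) := fun x y hxy ↦ by
  simpa [momentCurve] using congrFun hxy ⟨0, hh⟩

theorem sum_map_momentCurve_apply {R : Type*} [Semiring R] {h : ℕ} (s : Multiset R) (i : Fin h) :
    (s.map (momentCurve R h)).sum i = (s.map (· ^ (i.val + 1))).sum := by
  rw [Pi.multiset_sum_apply, Multiset.map_map]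
  rfl

theorem isBhSet_one_range_momentCurve {R : Type*} [CommRing R] [IsDomain R] {h : ℕ}
    (hfact : (h.factorial : R) ≠ 0) : IsBhSet (Set.range (momentCurve R h)) h 1 := by
  refine isBhSet_one_range fun s t hs ht hsum ↦ eq_of_sum_map_pow_eq hfact hs ht fun k hk ↦ ?_
  obtain ⟨hk_pos, hk_le⟩ := Finset.mem_Icc.1 hk
  have hcoord := congrFun hsum ⟨k - 1, by lia⟩
  simpa only [sum_map_momentCurve_apply, Nat.sub_add_cancel hk_pos] using hcoord

theorem exists_isBhSet_one_of_finrank_eq {K : Type*} (F V : Type*) [Field K] [Field F]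
    [Algebra K F] [FiniteDimensional K F] [AddCommGroup V] [Module K V] [FiniteDimensional K V]
    {h : ℕ} (hh : 0 < h) (hfact : (h.factorial : F) ≠ 0)
    (hfinrank : Module.finrank K V = h * Module.finrank K F) :
    ∃ A : Set V, IsBhSet A h 1 ∧ A.encard = ENat.card F := by
  have hfinrank_pi : Module.finrank K (Fin h → F) = Module.finrank K V := by
    simp [Module.finrank_pi_fintype, hfinrank]
  let e : (Fin h → F) ≃ₗ[K] V := LinearEquiv.ofFinrankEq _ _ hfinrank_pi
  refine ⟨e '' Set.range (momentCurve F h),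
    (isBhSet_one_range_momentCurve hfact).image (f := (e : (Fin h → F) →+ V)) e.injective, ?_⟩
  rw [e.injective.encard_image, ← Set.image_univ, (momentCurve_injective F hh).encard_image,
    Set.encard_univ]

/-- For every prime `p`, every `h ≥ 2` with `p > h`, and every `n ≥ 1`,
there is a `B_h[1]` set with exactly `pⁿ` elements in `((ℤ/pℤ)^(h·n), +)`. -/
theorem stmt1 (p h n : ℕ) (hp : p.Prime) (hh : 2 ≤ h) (hph : h < p) (hn : 0 < n) :
    ∃ A : Finset (Fin (h * n) → ZMod p),
      IsBhSet (A : Set (Fin (h * n) → ZMod p)) h 1 ∧ A.card = p ^ n := by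
  have : Fact p.Prime := ⟨hp⟩
  have hfact : (h.factorial : GaloisField p n) ≠ 0 := by
    rw [Ne, CharP.cast_eq_zero_iff _ p, hp.dvd_factorial]
    exact hph.not_ge
  have hfinrank : Module.finrank (ZMod p) (Fin (h * n) → ZMod p) =
      h * Module.finrank (ZMod p) (GaloisField p n) := by
    rw [Module.finrank_fin_fun, GaloisField.finrank p hn.ne']
  obtain ⟨A, hA, hA_card⟩ :=
    exists_isBhSet_one_of_finrank_eq (GaloisField p n) _ (by lia) hfact hfinrank
  lift A to Finset (Fin (h * n) → ZMod p) using A.toFinite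
  rw [Set.encard_coe_eq_coe_finsetCard, ENat.card_eq_coe_natCard, GaloisField.card p n hn.ne',
    Nat.cast_inj] at hA_card
  exact ⟨A, hA, hA_card⟩
end

section
/- Let φ : G → G′ be a homomorphism between abelian groups G and G′ whose kernel is finite of cardinality g′. If A ⊆ G is a B_h[g] set on G (h ≥ 2, g ≥ 1), then the image φ(A) is a B_h[g·g′] set on the subgroup φ(G) of G′ (equivalently, on G′). -/
/-!
Every representation of `y` as a sum of `h` elements of `φ(A)` is the image of a representation,
by elements of `A`, of some point of the fibre `φ⁻¹(y)`. Each point of the fibre has at most `g`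
representations, and a nonempty fibre is a coset of the kernel, so it has `g'` points.
-/

section

variable {α β ι : Type*}

theorem encard_le_natCast_iff_forall_finset_card_le {s : Set α} {n : ℕ} :
    s.encard ≤ n ↔ ∀ t : Finset α, (t : Set α) ⊆ s → t.card ≤ n := by
  refine ⟨fun hs t hts ↦ ?_, fun hs ↦ ?_⟩
  · have ht : (t : Set α).encard ≤ n := (Set.encard_le_encard hts).trans hs
    simpa using ht
  · by_contra! hlt
    obtain ⟨u, hus, hu⟩ := Set.exists_subset_encard_eq (Order.add_one_le_of_lt hlt)
    lift u to Finset α using Set.finite_of_encard_eq_coe (k := n + 1) (by simpa using hu)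
    have hcard : u.card = n + 1 := by
      rw [Set.encard_coe_eq_coe_finsetCard] at hu
      exact_mod_cast hu
    have := hs u hus
    lia

theorem encard_biUnion_le_encard_mul {t : Set ι} {s : ι → Set α} {n : ℕ∞}
    (hs : ∀ i ∈ t, (s i).encard ≤ n) : (⋃ i ∈ t, s i).encard ≤ t.encard * n := by
  rcases t.finite_or_infinite with ht | ht
  · lift t to Finset ι using ht
    calc (⋃ i ∈ t, s i).encard ≤ ∑ i ∈ t, (s i).encard := t.set_encard_biUnion_le s
      _ ≤ t.card • n := t.sum_le_card_nsmul _ _ hs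
      _ = (t : Set ι).encard * n := by rw [nsmul_eq_mul, Set.encard_coe_eq_coe_finsetCard]
  · rcases eq_or_ne n 0 with rfl | hn
    · simpa using hs
    · simp [ht.encard_eq, ENat.top_mul hn]

theorem exists_multiset_map_eq_of_forall_mem_image {f : α → β} {A : Set α} {t : Multiset β}
    (ht : ∀ b ∈ t, b ∈ f '' A) : ∃ s : Multiset α, (∀ a ∈ s, a ∈ A) ∧ s.map f = t := by
  choose lift lift_mem map_lift using ht
  refine ⟨t.pmap lift fun _ hb ↦ hb, fun a ha ↦ ?_, ?_⟩
  · obtain ⟨b, hb, rfl⟩ := Multiset.mem_pmap.mp ha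
    exact lift_mem b hb
  · simp only [Multiset.map_pmap, map_lift, Multiset.pmap_eq_map, Multiset.map_id']

end

section

variable {M N : Type*} [AddCommMonoid M] [AddCommMonoid N]

/-- The representations of `x` as an unordered sum of `h` elements of `A`, with repetitions
allowed. Bounding the cardinality of these sets is the `B_h[g]` property. -/
def sumRepresentations (A : Set M) (h : ℕ) (x : M) : Set (Multiset M) :=
  {s | s.card = h ∧ (∀ a ∈ s, a ∈ A) ∧ s.sum = x}

theorem isBhSet_iff_encard_sumRepresentations_le {A : Set M} {h g : ℕ} :
    IsBhSet A h g ↔ ∀ x, (sumRepresentations A h x).encard ≤ g :=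
  forall_congr' fun _ ↦ encard_le_natCast_iff_forall_finset_card_le.symm

theorem sumRepresentations_image_subset (φ : M →+ N) (A : Set M) (h : ℕ) (y : N) :
    sumRepresentations (φ '' A) h y ⊆
      Multiset.map φ '' ⋃ x ∈ φ ⁻¹' {y}, sumRepresentations A h x := by
  rintro t ⟨rfl, htA, rfl⟩
  obtain ⟨s, hsA, rfl⟩ := exists_multiset_map_eq_of_forall_mem_image htA
  have hsum : s.sum ∈ φ ⁻¹' {(s.map φ).sum} := map_multiset_sum φ s
  exact ⟨s, Set.mem_biUnion hsum ⟨(s.card_map φ).symm, hsA, rfl⟩, rfl⟩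

theorem stmt4_general (φ : M →+ N) {h g g' : ℕ} (hφ : ∀ y, (φ ⁻¹' {y}).encard ≤ g')
    {A : Set M} (hA : IsBhSet A h g) : IsBhSet (φ '' A) h (g * g') := by
  rw [isBhSet_iff_encard_sumRepresentations_le] at hA ⊢
  intro y
  calc (sumRepresentations (φ '' A) h y).encard
      ≤ (Multiset.map φ '' ⋃ x ∈ φ ⁻¹' {y}, sumRepresentations A h x).encard :=
        Set.encard_le_encard (sumRepresentations_image_subset φ A h y)
    _ ≤ (⋃ x ∈ φ ⁻¹' {y}, sumRepresentations A h x).encard := Set.encard_image_le _ _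
    _ ≤ (φ ⁻¹' {y}).encard * g := encard_biUnion_le_encard_mul fun x _ ↦ hA x
    _ ≤ g' * g := by gcongr; exact hφ y
    _ = (g * g' : ℕ) := by rw [Nat.cast_mul, mul_comm]

end

theorem encard_preimage_singleton_le_encard_ker {G H : Type*} [AddGroup G] [AddGroup H]
    (φ : G →+ H) (y : H) : (φ ⁻¹' {y}).encard ≤ (φ.ker : Set G).encard := by
  rcases (φ ⁻¹' {y}).eq_empty_or_nonempty with hempty | ⟨x, rfl⟩
  · simp [hempty]
  · exact (Set.encard_congr (φ.fiberEquivKer x)).le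

/-- If `φ : G → G′` is a homomorphism of abelian groups with finite kernel
of cardinality `g′`, and `A` is a `B_h[g]` set on `G`, then `φ(A)` is a `B_h[g·g′]` set
on `G′`. -/
theorem stmt4 {G G' : Type*} [AddCommGroup G] [AddCommGroup G'] (φ : G →+ G')
    (h g g' : ℕ) (hh : 2 ≤ h) (hg : 1 ≤ g)
    (hfin : (φ.ker : Set G).Finite) (hker : Nat.card φ.ker = g')
    (A : Set G) (hA : IsBhSet A h g) :
    IsBhSet (φ '' A) h (g * g') := by
  have hcard : (φ.ker : Set G).encard = g' := hker ▸ hfin.cast_ncard_eq.symm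
  exact stmt4_general φ (fun y ↦ hcard ▸ encard_preimage_singleton_le_encard_ker φ y) hA
end

section
/- Let p be a prime, n a positive integer, and q = pⁿ. Let α and β be primitive elements (generators) of the cyclic multiplicative group F_q^× of the finite field with q elements, and let a ∈ F_q^×. Define log_β : F_q^× → ℤ/(q−1)ℤ to be the discrete logarithm to base β (so β^{log_β(x)} = x). Then the set G(α, β, a) := {(i mod (q−1), log_β(a − α^i)) : i = 1, …, q−1, α^i ≠ a} is a B_2[1] (Sidon) set in the group (ℤ/(q−1)ℤ × ℤ/(q−1)ℤ, +). -/
/-!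
If `x + y = a` and `x' + y' = a`, then `y * y' = a ^ 2 - a * (x + x') + x * x'`, so for `a ≠ 0` the
coordinatewise product `(x * x', y * y')` determines both `x + x'` and `x * x'`, hence the pair
`{x, x'}`: the line `x + y = a` is a multiplicative Sidon set. Exponentiation
`(i, j) ↦ (α ^ i, β ^ j)` turns sums into products and carries Golomb's set injectively into this
line.
-/

open AddChar Function

theorem eq_and_eq_or_eq_and_eq_of_add_eq_of_mul_eq {R : Type*} [CommRing R] [IsDomain R]
    {x y x' y' : R} (hadd : x + y = x' + y') (hmul : x * y = x' * y') :
    x = x' ∧ y = y' ∨ x = y' ∧ y = x' := by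
  have hroots : (x - x') * (x - y') = 0 := by linear_combination x * hadd - hmul
  rcases mul_eq_zero.mp hroots with h | h
  · exact .inl ⟨sub_eq_zero.mp h, by linear_combination hadd - h⟩
  · exact .inr ⟨sub_eq_zero.mp h, by linear_combination hadd - h⟩

section IsBhSet

variable {G H : Type*} [AddCommMonoid G] [AddCommMonoid H] {h g : ℕ}

theorem IsBhSet.mono {A B : Set G} (hB : IsBhSet B h g) (hAB : A ⊆ B) : IsBhSet A h g :=
  fun x S hS => hB x S fun s hs =>
    ⟨(hS s hs).1, fun b hb => hAB ((hS s hs).2.1 b hb), (hS s hs).2.2⟩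

theorem IsBhSet.of_injOn {A : Set G} {B : Set H} (hB : IsBhSet B h g) (f : G →+ H)
    (hmaps : Set.MapsTo f A B) (hinj : Set.InjOn f A) : IsBhSet A h g := by
  classical
  intro x S hS
  have hmap_inj : Set.InjOn (Multiset.map f) (S : Set (Multiset G)) := by
    refine Set.LeftInvOn.injOn (f₁' := Multiset.map (invFunOn f A)) fun s hs => ?_
    rw [Multiset.map_map]
    exact (Multiset.map_congr rfl fun b hb => hinj.leftInvOn_invFunOn ((hS s hs).2.1 b hb)).trans
      (Multiset.map_id s)
  rw [← Finset.card_image_of_injOn hmap_inj]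
  refine hB (f x) _ (Finset.forall_mem_image.mpr fun s hs => ?_)
  obtain ⟨hcard, hmem, hsum⟩ := hS s hs
  exact ⟨by rw [Multiset.card_map, hcard],
    Multiset.forall_mem_map_iff.mpr fun b hb => hmaps (hmem b hb),
    by rw [← map_multiset_sum, hsum]⟩

theorem isBhSet_two_one_of_add_eq_add {A : Set G}
    (hA : ∀ u ∈ A, ∀ v ∈ A, ∀ u' ∈ A, ∀ v' ∈ A, u + v = u' + v' →
      u = u' ∧ v = v' ∨ u = v' ∧ v = u') : IsBhSet A 2 1 := by
  intro x S hS
  refine Finset.card_le_one.mpr fun s hs t ht => ?_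
  obtain ⟨hs_card, hs_mem, hs_sum⟩ := hS s hs
  obtain ⟨ht_card, ht_mem, ht_sum⟩ := hS t ht
  obtain ⟨u, v, rfl⟩ := Multiset.card_eq_two.mp hs_card
  obtain ⟨u', v', rfl⟩ := Multiset.card_eq_two.mp ht_card
  rw [Multiset.sum_pair] at hs_sum ht_sum
  rcases hA u (hs_mem u (by simp)) v (hs_mem v (by simp)) u' (ht_mem u' (by simp))
    v' (ht_mem v' (by simp)) (hs_sum.trans ht_sum.symm) with ⟨rfl, rfl⟩ | ⟨rfl, rfl⟩
  · rfl
  · exact Multiset.pair_comm _ _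

end IsBhSet

section Domain

variable {R : Type*} [CommRing R] [IsDomain R] {a : R}

theorem isBhSet_additive_line (ha : a ≠ 0) :
    IsBhSet {v : Additive R × Additive R | v.1.toMul + v.2.toMul = a} 2 1 := by
  refine isBhSet_two_one_of_add_eq_add ?_
  rintro ⟨x, y⟩ (hxy : x.toMul + y.toMul = a) ⟨z, w⟩ (hzw : z.toMul + w.toMul = a)
    ⟨x', y'⟩ (hxy' : x'.toMul + y'.toMul = a) ⟨z', w'⟩ (hzw' : z'.toMul + w'.toMul = a) hsum
  have hmul_fst : x.toMul * z.toMul = x'.toMul * z'.toMul := congrArg Prod.fst hsum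
  have hmul_snd : y.toMul * w.toMul = y'.toMul * w'.toMul := congrArg Prod.snd hsum
  rw [eq_sub_of_add_eq' hxy, eq_sub_of_add_eq' hzw, eq_sub_of_add_eq' hxy',
    eq_sub_of_add_eq' hzw'] at hmul_snd
  have hadd_fst : x.toMul + z.toMul = x'.toMul + z'.toMul :=
    mul_left_cancel₀ ha (by linear_combination hmul_fst - hmul_snd)
  have eq_of_fst_eq {x y x' y' : Additive R} (h : x.toMul + y.toMul = a)
      (h' : x'.toMul + y'.toMul = a) (hx : x = x') : (x, y) = (x', y') := by
    subst hx
    exact Prod.ext rfl (Additive.toMul.injective (add_left_cancel (h.trans h'.symm)))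
  exact (eq_and_eq_or_eq_and_eq_of_add_eq_of_mul_eq hadd_fst hmul_fst).imp
    (fun h => ⟨eq_of_fst_eq hxy hxy' h.1, eq_of_fst_eq hzw hzw' h.2⟩)
    (fun h => ⟨eq_of_fst_eq hxy hzw' h.1, eq_of_fst_eq hzw hxy' h.2⟩)

theorem stmt7_general {A B : Type*} [AddCommMonoid A] [AddCommMonoid B] (φ : AddChar A R)
    (hφ : Injective φ) (ψ : AddChar B R) (ha : a ≠ 0) (log : R → B)
    (hlog : ∀ x : R, x ≠ 0 → ψ (log x) = x) :
    IsBhSet {v : A × B | ∃ i : A, φ i ≠ a ∧ v = (i, log (a - φ i))} 2 1 := by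
  refine (isBhSet_additive_line ha).of_injOn (φ.toAddMonoidHom.prodMap ψ.toAddMonoidHom) ?_ ?_
  · rintro _ ⟨i, hi, rfl⟩
    change φ i + ψ (log (a - φ i)) = a
    rw [hlog _ (sub_ne_zero.mpr hi.symm), add_sub_cancel]
  · rintro _ ⟨i, -, rfl⟩ _ ⟨j, -, rfl⟩ hij
    obtain rfl : i = j := hφ (congrArg Prod.fst hij)
    rfl

end Domain

theorem zmodChar_injective {M : Type*} [CommMonoid M] {m : ℕ} [NeZero m] {ζ : M}
    (hζ : IsPrimitiveRoot ζ m) : Injective (zmodChar m hζ.pow_eq_one) :=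
  fun z w h => ZMod.val_injective m (hζ.pow_inj z.val_lt w.val_lt h)

theorem isPrimitiveRoot_card_sub_one_of_forall_mem_zpowers {F : Type*} [Field F] [Fintype F]
    {γ : Fˣ} (hγ : ∀ u : Fˣ, u ∈ Subgroup.zpowers γ) :
    IsPrimitiveRoot (γ : F) (Fintype.card F - 1) := by
  rw [IsPrimitiveRoot.coe_units_iff, ← Nat.card_eq_fintype_card, ← Nat.card_units,
    ← orderOf_eq_card_of_forall_mem_zpowers hγ]
  exact IsPrimitiveRoot.orderOf γ

/-- Golomb's construction: for `q = pⁿ`, primitive elements `α, β` of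
`F_q^×`, `a ∈ F_q^×`, and `log_β` the discrete logarithm to base `β`, the set
`{(i, log_β(a − αⁱ)) : i = 1, …, q−1, αⁱ ≠ a}` is a Sidon (`B_2[1]`) set in
`(ℤ/(q−1)ℤ × ℤ/(q−1)ℤ, +)`. -/
theorem stmt7 (p n q : ℕ) (hp : p.Prime) (hn : 0 < n) (hq : q = p ^ n)
    {F : Type*} [Field F] [Fintype F] (hF : Fintype.card F = q)
    (α β : Fˣ)
    (hα : ∀ u : Fˣ, u ∈ Subgroup.zpowers α)
    (hβ : ∀ u : Fˣ, u ∈ Subgroup.zpowers β)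
    (a : Fˣ)
    (logβ : F → ZMod (q - 1))
    (hlog : ∀ x : F, x ≠ 0 → (β : F) ^ (logβ x).val = x) :
    IsBhSet
      {v : ZMod (q - 1) × ZMod (q - 1) | ∃ i : ℕ, 1 ≤ i ∧ i ≤ q - 1 ∧
        (α : F) ^ i ≠ (a : F) ∧
        v = ((i : ZMod (q - 1)), logβ ((a : F) - (α : F) ^ i))} 2 1 := by
  subst hF
  have : NeZero (Fintype.card F - 1) := ⟨(Nat.sub_pos_of_lt Fintype.one_lt_card).ne'⟩
  have hα_root := isPrimitiveRoot_card_sub_one_of_forall_mem_zpowers hα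
  have hβ_pow := FiniteField.pow_card_sub_one_eq_one (β : F) β.ne_zero
  refine (stmt7_general _ (zmodChar_injective hα_root) (zmodChar _ hβ_pow) a.ne_zero
    logβ hlog).mono ?_
  rintro _ ⟨i, -, -, hi, rfl⟩
  exact ⟨i, by rwa [zmodChar_apply'], by rw [zmodChar_apply']⟩
end

section
/- Let q be a prime power, let α be a primitive element of the cyclic group F_q^×, and let a ∈ F_q^×. Then the set {i ∈ {1, …, q−1} : α^i ≠ a} has exactly q − 2 elements, and consequently the Golomb set G(α, β, a) = {(i mod (q−1), log_β(a − α^i)) : i = 1, …, q−1, α^i ≠ a} (for β a primitive element of F_q^× and log_β the discrete logarithm to base β) has exactly q − 2 elements; hence there exists a Sidon (B_2[1]) set of cardinality q − 2 in the group (ℤ/(q−1)ℤ × ℤ/(q−1)ℤ, +). -/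
/-!
The points `(x, y)` of `Fˣ × Fˣ` on the line `x + y = a` form a multiplicative Sidon set when
`a ≠ 0`: from `x₁ x₂` and `y₁ y₂ = (a - x₁) (a - x₂)` one recovers `x₁ + x₂`, hence the unordered
pair `{x₁, x₂}`. Discrete logarithms carry this set to `ℤ/(q-1)ℤ × ℤ/(q-1)ℤ`. A point of the line
is determined by its first coordinate, which ranges over the elements of `Fˣ` other than `a`.
-/

open Set Function

theorem isBhSet_two_one_iff {G : Type*} [AddCancelCommMonoid G] {A : Set G} :
    IsBhSet A 2 1 ↔
      ∀ u ∈ A, ∀ v ∈ A, ∀ u' ∈ A, ∀ v' ∈ A, u + v = u' + v' → u = u' ∨ u = v' := by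
  classical
  constructor
  · intro hA u hu v hv u' hu' v' hv' hsum
    have hcard : ({{u, v}, {u', v'}} : Finset (Multiset G)).card ≤ 1 :=
      hA (u + v) _ (by simp [hu, hv, hu', hv', hsum])
    have hpair : ({u, v} : Multiset G) = {u', v'} :=
      Finset.card_le_one.1 hcard _ (by simp) _ (by simp)
    have hmem : u ∈ ({u', v'} : Multiset G) := hpair ▸ by simp
    simpa using hmem
  · intro hA x S hS
    refine Finset.card_le_one.2 fun s hs t ht ↦ ?_
    obtain ⟨hs_card, hsA, hs_sum⟩ := hS s hs
    obtain ⟨ht_card, htA, ht_sum⟩ := hS t ht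
    obtain ⟨u, v, rfl⟩ := Multiset.card_eq_two.1 hs_card
    obtain ⟨u', v', rfl⟩ := Multiset.card_eq_two.1 ht_card
    have hsum : u + v = u' + v' := by simpa using hs_sum.trans ht_sum.symm
    rcases hA u (hsA u (by simp)) v (hsA v (by simp)) u' (htA u' (by simp)) v' (htA v' (by simp))
      hsum with rfl | rfl
    · rw [add_left_cancel hsum]
    · rw [add_comm u' u] at hsum
      rw [add_left_cancel hsum, Multiset.pair_comm]

theorem eq_or_eq_of_add_eq_add_of_mul_eq_mul {R : Type*} [CommRing R] [NoZeroDivisors R]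
    {x y x' y' : R} (hadd : x + y = x' + y') (hmul : x * y = x' * y') : x = x' ∨ x = y' := by
  have hroot : (x - x') * (x - y') = 0 := by linear_combination x * hadd - hmul
  simpa only [mul_eq_zero, sub_eq_zero] using hroot

/-- The Golomb set as the solution set of `φ x + ψ y = a`. For the discrete exponentials
`φ x = α ^ x` and `ψ y = β ^ y` it is the set `G(α, β, a)`. -/
def golombSet {G H R : Type*} [AddMonoid G] [AddMonoid H] [CommRing R]
    (φ : AddChar G R) (ψ : AddChar H R) (a : R) : Set (G × H) :=
  {v | φ v.1 + ψ v.2 = a}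

section GolombSet

variable {G H R : Type*} [CommRing R]

theorem fst_injOn_golombSet [AddMonoid G] [AddMonoid H] (φ : AddChar G R) {ψ : AddChar H R}
    (hψ : Injective ψ) (a : R) : InjOn Prod.fst (golombSet φ ψ a) := by
  rintro ⟨x, y⟩ (hy : φ x + ψ y = a) ⟨_, y'⟩ (hy' : φ _ + ψ y' = a) rfl
  rw [hψ (add_left_cancel (hy.trans hy'.symm))]

theorem isBhSet_golombSet [AddCancelCommMonoid G] [AddCancelCommMonoid H] [NoZeroDivisors R]
    {φ : AddChar G R} {ψ : AddChar H R} (hφ : Injective φ) (hψ : Injective ψ) {a : R}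
    (ha : a ≠ 0) : IsBhSet (golombSet φ ψ a) 2 1 := by
  refine isBhSet_two_one_iff.2 fun u hu v hv u' hu' v' hv' hsum ↦ ?_
  have hmul : φ u.1 * φ v.1 = φ u'.1 * φ v'.1 := by
    simpa only [Prod.fst_add, AddChar.map_add_eq_mul] using congrArg (fun w ↦ φ w.1) hsum
  have hmul_compl : (a - φ u.1) * (a - φ v.1) = (a - φ u'.1) * (a - φ v'.1) := by
    simpa only [Prod.snd_add, AddChar.map_add_eq_mul, eq_sub_of_add_eq' hu, eq_sub_of_add_eq' hv,
      eq_sub_of_add_eq' hu', eq_sub_of_add_eq' hv'] using congrArg (fun w ↦ ψ w.2) hsum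
  have hadd : φ u.1 + φ v.1 = φ u'.1 + φ v'.1 :=
    mul_left_cancel₀ ha (by linear_combination hmul - hmul_compl)
  have hfst := fst_injOn_golombSet φ hψ a
  exact (eq_or_eq_of_add_eq_add_of_mul_eq_mul hadd hmul).imp
    (fun h ↦ hfst hu hu' (hφ h)) (fun h ↦ hfst hu hv' (hφ h))

theorem fst_image_golombSet [AddMonoid G] [AddGroup H] [Nontrivial R] (φ : AddChar G R)
    {ψ : AddChar H R} (hψ : ∀ x ≠ 0, x ∈ range ψ) (a : R) :
    Prod.fst '' golombSet φ ψ a = {x | φ x ≠ a} := by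
  ext x
  constructor
  · rintro ⟨⟨x, y⟩, hy : φ x + ψ y = a, rfl⟩ (hx : φ x = a)
    exact (ψ.val_isUnit y).ne_zero (left_eq_add.1 (hx.trans hy.symm))
  · intro hx
    obtain ⟨y, hy⟩ := hψ (a - φ x) (sub_ne_zero.2 (Ne.symm hx))
    exact ⟨(x, y), eq_sub_iff_add_eq'.1 hy, rfl⟩

end GolombSet

theorem ncard_setOf_apply_ne {ι X : Type*} {f : ι → X} (hf : Injective f) {a : X}
    (ha : a ∈ range f) : {i | f i ≠ a}.ncard = Nat.card ι - 1 := by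
  obtain ⟨i₀, rfl⟩ := ha
  have hcompl : {i | f i ≠ f i₀} = univ \ {i₀} := by
    ext i
    simp [hf.eq_iff]
  rw [hcompl, ncard_sdiff_singleton_of_mem (mem_univ i₀), ncard_univ]

section ZMod

variable {n : ℕ} [NeZero n]

theorem zmod_natCast_bijOn_Icc : BijOn (Nat.cast : ℕ → ZMod n) (Icc 1 n) univ := by
  have hsurj : SurjOn (Nat.cast : ℕ → ZMod n) (Finset.Icc 1 n) (Finset.univ : Finset (ZMod n)) :=
    fun z _ ↦ ⟨(z - 1).val + 1, by simpa using Nat.succ_le_of_lt (z - 1).val_lt, by simp⟩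
  have hinj := Finset.injOn_of_surjOn_of_card_le _ (fun _ _ ↦ Finset.mem_univ _) hsurj (by simp)
  simpa using BijOn.mk (mapsTo_univ _ _) hinj (by simpa using hsurj)

theorem ncard_setOf_natCast_zmod (P : ZMod n → Prop) :
    {i : ℕ | 1 ≤ i ∧ i ≤ n ∧ P i}.ncard = {z | P z}.ncard := by
  simp only [← and_assoc]
  exact (zmod_natCast_bijOn_Icc.subset_right (subset_univ _)).ncard_eq

theorem setOf_log_eq_golombSet {H R : Type*} [AddGroup H] [CommRing R] [Nontrivial R]
    (φ : AddChar (ZMod n) R) {ψ : AddChar H R} (hψ : Injective ψ) {log : R → H}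
    (hlog : ∀ x ≠ 0, ψ (log x) = x) (a : R) :
    {v : ZMod n × H | ∃ i : ℕ, 1 ≤ i ∧ i ≤ n ∧ φ i ≠ a ∧ v = ((i : ZMod n), log (a - φ i))} =
      golombSet φ ψ a := by
  ext ⟨x, y⟩
  constructor
  · rintro ⟨i, -, -, hi, hv⟩
    obtain ⟨rfl, rfl⟩ := Prod.mk.inj hv
    exact eq_sub_iff_add_eq'.1 (hlog _ (sub_ne_zero.2 hi.symm))
  · intro (hxy : φ x + ψ y = a)
    obtain ⟨i, ⟨hi_pos, hi_le⟩, rfl⟩ := zmod_natCast_bijOn_Icc.surjOn (mem_univ x)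
    have hψy : ψ y = a - φ i := eq_sub_of_add_eq' hxy
    have hne : a - φ i ≠ 0 := hψy ▸ (ψ.val_isUnit y).ne_zero
    exact ⟨i, hi_pos, hi_le, (sub_ne_zero.1 hne).symm,
      congrArg _ (hψ (hψy.trans (hlog _ hne).symm))⟩

theorem zmodChar_injective_of_isPrimitiveRoot {M : Type*} [CommMonoid M] {ζ : M}
    (hζ : IsPrimitiveRoot ζ n) : Injective (AddChar.zmodChar n hζ.pow_eq_one) :=
  fun z w h ↦ ZMod.val_injective n (hζ.pow_inj z.val_lt w.val_lt h)

end ZMod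

theorem isPrimitiveRoot_of_forall_mem_zpowers {F : Type*} [Field F] [Fintype F] {γ : Fˣ}
    (hγ : ∀ u, u ∈ Subgroup.zpowers γ) : IsPrimitiveRoot (γ : F) (Fintype.card F - 1) := by
  rw [← Nat.card_eq_fintype_card, ← Nat.card_units, ← orderOf_eq_card_of_forall_mem_zpowers hγ,
    IsPrimitiveRoot.coe_units_iff]
  exact IsPrimitiveRoot.orderOf γ

/-- For a prime power `q`, a primitive element `α` of `F_q^×` and
`a ∈ F_q^×`, the set `{i ∈ {1, …, q−1} : αⁱ ≠ a}` has exactly `q − 2` elements; hence the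
Golomb set `G(α, β, a)` has exactly `q − 2` elements, and there exists a Sidon (`B_2[1]`)
set of cardinality `q − 2` in `(ℤ/(q−1)ℤ × ℤ/(q−1)ℤ, +)`. -/
theorem stmt8 (p n q : ℕ) (hp : p.Prime) (hn : 0 < n) (hq : q = p ^ n)
    {F : Type*} [Field F] [Fintype F] (hF : Fintype.card F = q)
    (α β : Fˣ)
    (hα : ∀ u : Fˣ, u ∈ Subgroup.zpowers α)
    (hβ : ∀ u : Fˣ, u ∈ Subgroup.zpowers β)
    (a : Fˣ)
    (logβ : F → ZMod (q - 1))
    (hlog : ∀ x : F, x ≠ 0 → (β : F) ^ (logβ x).val = x) :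
    {i : ℕ | 1 ≤ i ∧ i ≤ q - 1 ∧ (α : F) ^ i ≠ (a : F)}.ncard = q - 2 ∧
    {v : ZMod (q - 1) × ZMod (q - 1) | ∃ i : ℕ, 1 ≤ i ∧ i ≤ q - 1 ∧
        (α : F) ^ i ≠ (a : F) ∧
        v = ((i : ZMod (q - 1)), logβ ((a : F) - (α : F) ^ i))}.ncard = q - 2 ∧
    ∃ S : Set (ZMod (q - 1) × ZMod (q - 1)), IsBhSet S 2 1 ∧ S.ncard = q - 2 := by
  subst hF
  have : NeZero (Fintype.card F - 1) := ⟨Nat.sub_ne_zero_of_lt Fintype.one_lt_card⟩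
  have hα_root := isPrimitiveRoot_of_forall_mem_zpowers hα
  have hβ_root := isPrimitiveRoot_of_forall_mem_zpowers hβ
  let φ := AddChar.zmodChar _ hα_root.pow_eq_one
  let ψ := AddChar.zmodChar _ hβ_root.pow_eq_one
  have hφ : Injective φ := zmodChar_injective_of_isPrimitiveRoot hα_root
  have hψ : Injective ψ := zmodChar_injective_of_isPrimitiveRoot hβ_root
  have hφ_natCast (i : ℕ) : φ i = (α : F) ^ i := AddChar.zmodChar_apply' _ i
  have ha : (a : F) ∈ range φ := by
    obtain ⟨k, rfl : α ^ k = a⟩ := mem_powers_iff_mem_zpowers.2 (hα a)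
    exact ⟨k, by rw [hφ_natCast, Units.val_pow_eq_pow_val]⟩
  have hcard : {z | φ z ≠ a}.ncard = Fintype.card F - 2 := by
    rw [ncard_setOf_apply_ne hφ ha, Nat.card_zmod, Nat.sub_sub]
  have hgolomb : (golombSet φ ψ (a : F)).ncard = Fintype.card F - 2 := by
    rw [← (fst_injOn_golombSet φ hψ (a : F)).ncard_image,
      fst_image_golombSet φ (fun x hx ↦ ⟨logβ x, hlog x hx⟩), hcard]
  simp only [← hφ_natCast]
  rw [ncard_setOf_natCast_zmod (φ · ≠ a), setOf_log_eq_golombSet φ hψ hlog]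
  exact ⟨hcard, hgolomb, _, isBhSet_golombSet hφ hψ a.ne_zero, hgolomb⟩
end

section
/- Let d ≥ 2, N ≥ 2, h ≥ 2 and g ≥ 1 be integers. Then F_h¹(N^d, g) ≤ F_h^d(N, g); that is, the maximum cardinality of a B_h[g] set of integers contained in {0, 1, …, N^d − 1} ⊆ ℤ is at most the maximum cardinality of a B_h[g] subset of {0, 1, …, N−1}^d ⊆ ℤ^d. -/
/-!
The map `v ↦ ∑ i, v i * N ^ i` is additive and, by base-`N` expansion, sends the box
`{0, …, N - 1}^d` onto the interval `{0, …, N^d - 1}`. Given a `B_h[g]` set `A` in the interval,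
choose one preimage in the box for each element of `A`. An additive map carries representations
of `x` to representations of its image, and distinct ones stay distinct when the map is injective
on the summands, so the chosen preimages form a `B_h[g]` set of the same size.
-/

theorem multiset_map_injOn {α β : Type*} {f : α → β} {B : Set α} (hf : B.InjOn f) :
    Set.InjOn (Multiset.map f) {s | ∀ a ∈ s, a ∈ B} := by
  intro s hs t ht hst
  lift s to Multiset B using hs
  lift t to Multiset B using ht
  rw [Multiset.map_map, Multiset.map_map] at hst
  exact congrArg _ (Multiset.map_injective hf.injective hst)

theorem bddAbove_card_finset_subset {α : Type*} {T : Set α} (hT : T.Finite)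
    (P : Finset α → Prop) :
    BddAbove {k : ℕ | ∃ A : Finset α, (A : Set α) ⊆ T ∧ P A ∧ A.card = k} := by
  refine ⟨hT.toFinset.card, ?_⟩
  rintro _ ⟨A, hAT, -, rfl⟩
  exact Finset.card_le_card (hT.subset_toFinset.2 hAT)

section Transfer

variable {G H F : Type*} [AddCommMonoid G] [AddCommMonoid H] [FunLike F G H]
  [AddMonoidHomClass F G H] {h g : ℕ}

theorem IsBhSet.of_mapsTo_of_injOn {A : Set H} {B : Set G} (hA : IsBhSet A h g) (φ : F)
    (hmaps : B.MapsTo φ A) (hinj : B.InjOn φ) : IsBhSet B h g := by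
  classical
  intro x S hS
  have hcard : (S.image (Multiset.map φ)).card = S.card :=
    Finset.card_image_of_injOn ((multiset_map_injOn hinj).mono fun s hs => (hS s hs).2.1)
  rw [← hcard]
  refine hA (φ x) _ (Finset.forall_mem_image.2 fun s hs => ?_)
  obtain ⟨hs_card, hs_mem, hs_sum⟩ := hS s hs
  refine ⟨by rw [Multiset.card_map, hs_card], ?_, by rw [← hs_sum, map_multiset_sum]⟩
  exact Multiset.forall_mem_map_iff.2 fun v hv => hmaps (hs_mem v hv)

theorem IsBhSet.exists_finset_card_eq_of_surjOn {A : Finset H} {T : Set G}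
    (hA : IsBhSet (A : Set H) h g) (φ : F) (hφ : T.SurjOn φ A) :
    ∃ B : Finset G, (B : Set G) ⊆ T ∧ IsBhSet (B : Set G) h g ∧ B.card = A.card := by
  classical
  obtain ⟨B, hBT, hinj, rfl⟩ := Finset.exists_subset_injOn_image_eq_of_surjOn T A hφ
  have hmaps : Set.MapsTo φ B (B.image φ) := fun v hv => Finset.mem_image_of_mem φ hv
  exact ⟨B, hBT, hA.of_mapsTo_of_injOn φ hmaps hinj, (Finset.card_image_of_injOn hinj).symm⟩

/-- The maximum cardinality of a `B_h[g]` set contained in `T`. With `T` the box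
`{0, …, N - 1}^d` it is `F_h^d(N, g)`. If the cardinalities are unbounded, which can happen only
for infinite `T`, the value is the junk value `0`. -/
noncomputable def maxBhCard (T : Set G) (h g : ℕ) : ℕ :=
  sSup {k : ℕ | ∃ A : Finset G, (A : Set G) ⊆ T ∧ IsBhSet (A : Set G) h g ∧ A.card = k}

theorem maxBhCard_le_of_surjOn {S : Set H} {T : Set G} (φ : F) (hT : T.Finite)
    (hφ : T.SurjOn φ S) : maxBhCard S h g ≤ maxBhCard T h g := by
  refine csSup_le' ?_
  rintro _ ⟨A, hAS, hA, rfl⟩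
  exact le_csSup (bddAbove_card_finset_subset hT _)
    (hA.exists_finset_card_eq_of_surjOn φ (hφ.mono subset_rfl hAS))

end Transfer

/-- The evaluation `v ↦ ∑ i, v i * b ^ i` of a vector of digits in base `b`, least significant
digit first; the entries of `v` are arbitrary integers, which makes the map linear. -/
def ofBaseDigits (b : ℤ) (d : ℕ) : (Fin d → ℤ) →ₗ[ℤ] ℤ :=
  Fintype.linearCombination ℤ fun i : Fin d => b ^ (i : ℕ)

theorem surjOn_ofBaseDigits (N d : ℕ) :
    Set.SurjOn (ofBaseDigits N d) {v | ∀ i, 0 ≤ v i ∧ v i ≤ (N : ℤ) - 1}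
      (Set.Icc 0 ((N : ℤ) ^ d - 1)) := by
  rintro a ⟨ha_nonneg, ha_le⟩
  lift a to ℕ using ha_nonneg
  have ha_lt : a < N ^ d := by exact_mod_cast Int.lt_of_le_sub_one ha_le
  obtain ⟨v, hv⟩ := finFunctionFinEquiv.surjective (⟨a, ha_lt⟩ : Fin (N ^ d))
  have hsum : ∑ i, (v i : ℕ) * N ^ (i : ℕ) = a := by
    rw [← finFunctionFinEquiv_apply, hv]
  refine ⟨fun i => (v i : ℕ), fun i => ⟨Int.natCast_nonneg _, ?_⟩, ?_⟩
  · exact Int.le_sub_one_of_lt (Int.ofNat_lt.2 (v i).isLt)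
  · simp only [ofBaseDigits, Fintype.linearCombination_apply, smul_eq_mul]
    exact_mod_cast hsum

/-- `F_h¹(N^d, g) ≤ F_h^d(N, g)`: the maximum size of a `B_h[g]` set of
integers contained in `{0, …, N^d − 1}` is at most the maximum size of a `B_h[g]` subset
of the box `{0, …, N−1}^d ⊆ ℤ^d`. -/
theorem stmt9 (d N h g : ℕ) (hd : 2 ≤ d) (hN : 2 ≤ N) (hh : 2 ≤ h) (hg : 1 ≤ g) :
    sSup {k : ℕ | ∃ A : Finset ℤ, (A : Set ℤ) ⊆ Set.Icc 0 ((N : ℤ) ^ d - 1) ∧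
        IsBhSet (A : Set ℤ) h g ∧ A.card = k} ≤
    sSup {k : ℕ | ∃ A : Finset (Fin d → ℤ),
        (∀ v ∈ A, ∀ i : Fin d, (0 : ℤ) ≤ v i ∧ v i ≤ (N : ℤ) - 1) ∧
        IsBhSet (A : Set (Fin d → ℤ)) h g ∧ A.card = k} := by
  have hbox : {v : Fin d → ℤ | ∀ i, 0 ≤ v i ∧ v i ≤ (N : ℤ) - 1}.Finite :=
    Set.Finite.pi' fun _ => Set.finite_Icc 0 ((N : ℤ) - 1)
  exact maxBhCard_le_of_surjOn (ofBaseDigits N d) hbox (surjOn_ofBaseDigits N d)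
end
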